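/- Let F be a field and let A = {0, 1, a, b} ⊆ F, where 0, 1, a, b are pairwise distinct. Then E(A) = E({0,1,a}) ∪ E({0,1,b}) ∪ E(a−b) ∪ E((a−b)/a) ∪ E((a−b)/b) ∪ E((a−1)/b) ∪ E((b−1)/a) ∪ E((a−1)/(b−1)) ∪ E((a−1)/(a−b)) ∪ E((b−1)/(a−b)) ∪ E(a/b), where E(c) = {c, −c, 1/c, −1/c} for c ∈ F \ {0} and E(S) is the exceptional set of a subset S of F. -/

import Mathlib

/-- The exceptional set `E(S)`: the set of nonzero `c` such that `S` is not a Sidon set for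
the binary linear form `x₁ + cx₂`. -/
def sidonExceptionalSet {F : Type*} [Field F] (S : Set F) : Set F :=
  {c : F | c ≠ 0 ∧ ¬ (∀ a₁ ∈ S, ∀ a₂ ∈ S, ∀ a₁' ∈ S, ∀ a₂' ∈ S,
    a₁ + c * a₂ = a₁' + c * a₂' → a₁ = a₁' ∧ a₂ = a₂')}

/-- `E(c) = {c, −c, 1/c, −1/c}` for a nonzero field element `c`. -/
def quadE {F : Type*} [Field F] (c : F) : Set F := {c, -c, c⁻¹, -c⁻¹}

/-! The exceptional `c` for `S` are exactly the quotients of two nonzero differences of elements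
of `S`. So `E(S)` is the union of the sets `E(d / e)` over pairs `d`, `e` of edges
(differences up to sign) of the complete graph on `S`. As `E(d / e) = E(e / d)`, unordered pairs
suffice, and the pairs with `d = e` only contribute `E(1)`. Of the 15 pairs of distinct edges of the
complete graph on `{0, 1, a, b}`, three lie in the triangle `{0, 1, a}` and three in the triangle
`{0, 1, b}`; the other nine give the remaining terms. -/

section

open scoped Pointwise

/-- The nonzero differences of elements of `S` are, up to sign, the elements of `P`; this allows
`E(S)` to be computed from one of `d`, `-d` for each difference `d`.
The set `P` may contain both. -/
def RepresentsDifferences {G : Type*} [AddGroup G] (S P : Set G) : Prop :=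
  (S - S) \ {0} = P ∪ -P

theorem representsDifferences_singleton {G : Type*} [AddGroup G] (x : G) :
    RepresentsDifferences {x} ∅ := by
  simp [RepresentsDifferences]

theorem RepresentsDifferences.insert {G : Type*} [AddGroup G] {S P : Set G} {x : G}
    (h : RepresentsDifferences S P) (hx : x ∉ S) :
    RepresentsDifferences (insert x S) ((· - x) '' S ∪ P) := by
  have ne_of_mem {s : G} (hs : s ∈ S) : s ≠ x := ne_of_mem_of_not_mem hs hx
  rw [RepresentsDifferences, Set.union_neg, Set.union_union_union_comm, ← h]
  ext d
  constructor
  · rintro ⟨⟨s, rfl | hs, t, rfl | ht, rfl⟩, hd⟩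
    · exact absurd (sub_self _) hd
    · exact Or.inl (Or.inr ⟨t, ht, (neg_sub s t).symm⟩)
    · exact Or.inl (Or.inl ⟨s, hs, rfl⟩)
    · exact Or.inr ⟨Set.sub_mem_sub hs ht, hd⟩
  · rintro ((⟨s, hs, rfl⟩ | ⟨s, hs, hd : s - x = -d⟩) | ⟨hd, hd0⟩)
    · exact ⟨Set.sub_mem_sub (Or.inr hs) (Or.inl rfl), sub_ne_zero.2 (ne_of_mem hs)⟩
    · obtain rfl : x - s = d := by rw [← neg_sub]; exact neg_eq_iff_eq_neg.2 hd
      exact ⟨Set.sub_mem_sub (Or.inl rfl) (Or.inr hs), sub_ne_zero.2 (ne_of_mem hs).symm⟩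
    · exact ⟨Set.sub_subset_sub (Set.subset_insert x S) (Set.subset_insert x S) hd, hd0⟩

theorem representsDifferences_triple {G : Type*} [AddGroup G] {x y z : G} (hyx : y ≠ x)
    (hzx : z ≠ x) (hzy : z ≠ y) :
    RepresentsDifferences {x, y, z} {z - y, z - x, y - x} := by
  have h := ((representsDifferences_singleton z).insert (x := y) (by simpa using hzy.symm)).insert
    (x := x) (by simp [hyx.symm, hzx.symm])
  convert h using 1
  simp only [Set.image_insert_eq, Set.image_singleton, Set.union_empty]
  grind

-- The listing order puts `d` before `e` for each `d / e` in `exceptional_set_four_element`.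
theorem representsDifferences_quadruple {G : Type*} [AddGroup G] {x y z w : G} (hyx : y ≠ x)
    (hzx : z ≠ x) (hzy : z ≠ y) (hwx : w ≠ x) (hwy : w ≠ y) (hzw : z ≠ w) :
    RepresentsDifferences {x, y, z, w} {z - y, w - y, z - w, z - x, w - x, y - x} := by
  rw [Set.pair_comm z w]
  convert (representsDifferences_triple hwy hzy hzw).insert (x := x)
    (by simp [hyx.symm, hzx.symm, hwx.symm]) using 1
  simp only [Set.image_insert_eq, Set.image_singleton]
  grind

variable {F : Type*} [Field F]

theorem sidonExceptionalSet_eq_div (S : Set F) :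
    sidonExceptionalSet S = ((S - S) \ {0}) / ((S - S) \ {0}) := by
  ext c
  constructor
  · rintro ⟨hc, h⟩
    push Not at h
    obtain ⟨x, hx, y, hy, z, hz, w, hw, heq, hne⟩ := h
    have hmul : c * (w - y) = x - z := by linear_combination -heq
    have hwy : w - y ≠ 0 := fun h0 =>
      hne (sub_eq_zero.1 (by rw [← hmul, h0, mul_zero])) (sub_eq_zero.1 h0).symm
    exact ⟨x - z, ⟨Set.sub_mem_sub hx hz, hmul ▸ mul_ne_zero hc hwy⟩,
      w - y, ⟨Set.sub_mem_sub hw hy, hwy⟩, (eq_div_of_mul_eq hwy hmul).symm⟩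
  · rintro ⟨_, ⟨⟨x, hx, z, hz, rfl⟩, hxz⟩, _, ⟨⟨w, hw, y, hy, rfl⟩, hwy⟩, rfl⟩
    refine ⟨div_ne_zero hxz hwy, fun h => hxz ?_⟩
    have hmul : (x - z) / (w - y) * (w - y) = x - z := div_mul_cancel₀ _ hwy
    exact sub_eq_zero.2 (h x hx y hy z hz w hw (by linear_combination -hmul)).1

theorem RepresentsDifferences.sidonExceptionalSet_eq {S P : Set F}
    (h : RepresentsDifferences S P) :
    sidonExceptionalSet S = ⋃ p ∈ P, ⋃ q ∈ P, quadE (p / q) := by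
  rw [sidonExceptionalSet_eq_div, h]
  ext c
  simp only [Set.mem_iUnion₂, exists_prop]
  constructor
  · rintro ⟨p, hp | hp, q, hq | hq, rfl⟩
    · exact ⟨p, hp, q, hq, by simp [quadE]⟩
    · exact ⟨p, hp, -q, hq, by simp [quadE, div_neg]⟩
    · exact ⟨-p, hp, q, hq, by simp [quadE, neg_div]⟩
    · exact ⟨-p, hp, -q, hq, by simp [quadE]⟩
  · rintro ⟨p, hp, q, hq, rfl | rfl | rfl | rfl⟩
    · exact Set.div_mem_div (Or.inl hp) (Or.inl hq)
    · exact neg_div q p ▸ Set.div_mem_div (Or.inr (Set.neg_mem_neg.2 hp)) (Or.inl hq)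
    · exact inv_div p q ▸ Set.div_mem_div (Or.inl hq) (Or.inl hp)
    · rw [inv_div, ← neg_div]
      exact Set.div_mem_div (Or.inr (Set.neg_mem_neg.2 hq)) (Or.inl hp)

theorem biUnion_biUnion_insert_of_symm {α β : Type*} {f : α → α → Set β}
    (hf : ∀ x y, f x y = f y x) (a : α) (s : Set α) :
    ⋃ x ∈ insert a s, ⋃ y ∈ insert a s, f x y =
      f a a ∪ (⋃ y ∈ s, f a y) ∪ ⋃ x ∈ s, ⋃ y ∈ s, f x y := by
  have hswap : ⋃ x ∈ s, f x a = ⋃ y ∈ s, f a y := by simp only [hf _ a]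
  simp only [Set.biUnion_insert, Set.iUnion_union_distrib, hswap]
  grind

theorem quadE_div_comm (x y : F) : quadE (x / y) = quadE (y / x) := by
  rw [← inv_div]
  simp only [quadE, inv_inv]
  grind

theorem sidonExceptionalSet_triple {x y z : F} (hyx : y ≠ x) (hzx : z ≠ x) (hzy : z ≠ y) :
    sidonExceptionalSet {x, y, z} =
      quadE 1 ∪ quadE ((z - y) / (z - x)) ∪ quadE ((z - y) / (y - x))
        ∪ quadE ((z - x) / (y - x)) := by
  rw [(representsDifferences_triple hyx hzx hzy).sidonExceptionalSet_eq]
  -- A separate pass, as `Set.biUnion_insert` would otherwise expand the inner unions first.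
  simp only [biUnion_biUnion_insert_of_symm quadE_div_comm]
  simp only [Set.biUnion_insert, Set.biUnion_singleton, div_self (sub_ne_zero.2 hyx),
    div_self (sub_ne_zero.2 hzx), div_self (sub_ne_zero.2 hzy)]
  grind

theorem exceptional_set_four_element_general {x y z w : F} (hyx : y ≠ x) (hzx : z ≠ x)
    (hzy : z ≠ y) (hwx : w ≠ x) (hwy : w ≠ y) (hzw : z ≠ w) :
    sidonExceptionalSet {x, y, z, w} =
      sidonExceptionalSet {x, y, z} ∪ sidonExceptionalSet {x, y, w}
        ∪ quadE ((z - w) / (y - x)) ∪ quadE ((z - w) / (z - x)) ∪ quadE ((z - w) / (w - x))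
        ∪ quadE ((z - y) / (w - x)) ∪ quadE ((w - y) / (z - x)) ∪ quadE ((z - y) / (w - y))
        ∪ quadE ((z - y) / (z - w)) ∪ quadE ((w - y) / (z - w))
        ∪ quadE ((z - x) / (w - x)) := by
  rw [sidonExceptionalSet_triple hyx hzx hzy, sidonExceptionalSet_triple hyx hwx hwy,
    (representsDifferences_quadruple hyx hzx hzy hwx hwy hzw).sidonExceptionalSet_eq]
  simp only [biUnion_biUnion_insert_of_symm quadE_div_comm]
  simp only [Set.biUnion_insert, Set.biUnion_singleton, div_self (sub_ne_zero.2 hyx),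
    div_self (sub_ne_zero.2 hzx), div_self (sub_ne_zero.2 hzy), div_self (sub_ne_zero.2 hwx),
    div_self (sub_ne_zero.2 hwy), div_self (sub_ne_zero.2 hzw)]
  ext c
  simp only [Set.mem_union]
  grind

end

/-- For `A = {0, 1, a, b}` with `0, 1, a, b` pairwise distinct,
`E(A) = E({0,1,a}) ∪ E({0,1,b}) ∪ E(a−b) ∪ E((a−b)/a) ∪ E((a−b)/b) ∪ E((a−1)/b)
∪ E((b−1)/a) ∪ E((a−1)/(b−1)) ∪ E((a−1)/(a−b)) ∪ E((b−1)/(a−b)) ∪ E(a/b)`. -/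
theorem exceptional_set_four_element
    (F : Type*) [Field F] (a b : F)
    (ha0 : a ≠ 0) (ha1 : a ≠ 1) (hb0 : b ≠ 0) (hb1 : b ≠ 1) (hab : a ≠ b) :
    sidonExceptionalSet ({0, 1, a, b} : Set F) =
      sidonExceptionalSet ({0, 1, a} : Set F) ∪ sidonExceptionalSet ({0, 1, b} : Set F)
        ∪ quadE (a - b) ∪ quadE ((a - b) / a) ∪ quadE ((a - b) / b)
        ∪ quadE ((a - 1) / b) ∪ quadE ((b - 1) / a) ∪ quadE ((a - 1) / (b - 1))
        ∪ quadE ((a - 1) / (a - b)) ∪ quadE ((b - 1) / (a - b)) ∪ quadE (a / b) := by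
  simpa only [sub_zero, div_one] using
    exceptional_set_four_element_general one_ne_zero ha0 ha1 hb0 hb1 hab
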